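/- There exists an absolute constant c > 0 such that the following holds for every ε ∈ (0,1) and every δ ∈ (0, cε). Set γ = (1/δ)·log(1 + (ε/2)/(1−ε/2)) and m = ⌊c·γ²/log γ⌋. Then there exists a measurable function f : ℝ → ℝ satisfying (1−ε)·φ(x−δ) ≤ f(x) ≤ φ(x−δ) for all x ∈ ℝ, such that for every integer i with 1 ≤ i ≤ m, ∫_ℝ xⁱ f(x) dx / ∫_ℝ f(x) dx = E_{z∼N(0,1)}[zⁱ]. (Equivalently: the conditional distribution on visible samples of some ε-corrupted version of N(δ,1) matches the first m moments of the standard Gaussian.) -/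

import Mathlib

open MeasureTheory

/-- The probability density function of the standard Gaussian `N(0,1)`. -/
noncomputable def gaussPDF (x : ℝ) : ℝ := Real.exp (-x ^ 2 / 2) / Real.sqrt (2 * Real.pi)

/-!
Let `D` be the part of `φ(x - δ) - φ(x)` living on `|x| > R`, with `R` a constant multiple of `γ`.
Then `φ + D` is `φ(x - δ)` outside `[-R, R]` and within a factor `1 ± O(δR) = 1 ± O(ε)` of it
inside. The tail `D` disturbs the moments of `φ` only slightly, and the disturbance of those up to
order `m` is undone by subtracting the function `P(x) √(1 - x²)` on `[-1, 1]`, `deg P ≤ m`, with the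
same moments as `D`. Expanding `P` in Chebyshev polynomials of the second kind, which are orthogonal
for the weight `√(1 - x²)`, and using `|Uᵢ(x)| ≤ (3 max(1, |x|))ⁱ`, its size is at most
`∫ (18|x|)ᵐ |D|`. Since `m log R ≲ R²`, the factor `(18|x|)ᵐ` is absorbed by the Gaussian decay
beyond `R`, leaving `O(δ)`, which is small compared with `ε φ(x - δ)` on `[-1, 1]`.
-/

section Chebyshev

open Polynomial.Chebyshev
open scoped Real

lemma one_sub_cos_sq_mul_eval_U_mul_eval_U (i j : ℤ) (θ : ℝ) :
    (1 - Real.cos θ ^ 2) * ((U ℝ i).eval (Real.cos θ) * (U ℝ j).eval (Real.cos θ)) =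
      ((T ℝ (i - j)).eval (Real.cos θ) - (T ℝ (i + j + 2)).eval (Real.cos θ)) / 2 := by
  have h_sub : ((i - j : ℤ) : ℝ) * θ = (i + 1) * θ - (j + 1) * θ := by push_cast; ring
  have h_add : ((i + j + 2 : ℤ) : ℝ) * θ = (i + 1) * θ + (j + 1) * θ := by push_cast; ring
  calc (1 - Real.cos θ ^ 2) * ((U ℝ i).eval (Real.cos θ) * (U ℝ j).eval (Real.cos θ))
      = ((U ℝ i).eval (Real.cos θ) * Real.sin θ) * ((U ℝ j).eval (Real.cos θ) * Real.sin θ) := by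
        rw [← Real.sin_sq]; ring
    _ = Real.sin ((i + 1) * θ) * Real.sin ((j + 1) * θ) := by rw [U_real_cos, U_real_cos]
    _ = _ := by rw [T_real_cos, T_real_cos, h_sub, h_add, Real.cos_sub, Real.cos_add]; ring

lemma sqrt_one_sub_sq_eq_zero {x : ℝ} (hx : 1 ≤ |x|) : √(1 - x ^ 2) = 0 :=
  Real.sqrt_eq_zero_of_nonpos (sub_nonpos.2 ((one_le_sq_iff_one_le_abs x).2 hx))

lemma integral_mul_sqrt_one_sub_sq (g : ℝ → ℝ) :
    ∫ x, g x * √(1 - x ^ 2) = ∫ x, (1 - x ^ 2) * g x ∂measureT := by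
  rw [integral_measureT, intervalIntegral.integral_of_le (by norm_num),
    ← integral_indicator measurableSet_Ioc]
  congr 1 with x
  by_cases hx : x ∈ Set.Ioc (-1 : ℝ) 1
  · rw [Set.indicator_of_mem hx, Real.sqrt_inv, mul_right_comm, ← div_eq_mul_inv, Real.div_sqrt,
      mul_comm]
  · have hx' : 1 ≤ |x| := by
      contrapose! hx
      exact ⟨(abs_lt.1 hx).1, (abs_lt.1 hx).2.le⟩
    rw [Set.indicator_of_notMem hx, sqrt_one_sub_sq_eq_zero hx', mul_zero]

theorem integral_eval_U_mul_eval_U_mul_sqrt (i j : ℕ) :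
    ∫ x, (U ℝ i).eval x * (U ℝ j).eval x * √(1 - x ^ 2) = if i = j then π / 2 else 0 := by
  have to_T : ∫ x, (1 - x ^ 2) * ((U ℝ i).eval x * (U ℝ j).eval x) ∂measureT =
      ∫ x, ((T ℝ ((i : ℤ) - j)).eval x - (T ℝ ((i : ℤ) + j + 2)).eval x) / 2 ∂measureT := by
    simp only [integral_measureT_eq_integral_cos, one_sub_cos_sq_mul_eval_U_mul_eval_U]
  rw [integral_mul_sqrt_one_sub_sq, to_T, integral_div,
    integral_sub (integrable_measureT (by fun_prop)) (integrable_measureT (by fun_prop)),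
    integral_eval_T_real_measureT_of_ne_zero (n := (i : ℤ) + j + 2) (by lia), sub_zero]
  split_ifs with hij
  · rw [hij, sub_self, integral_eval_T_real_measureT_zero]
  · rw [integral_eval_T_real_measureT_of_ne_zero (by lia), zero_div]

lemma integrable_mul_sqrt_one_sub_sq {g : ℝ → ℝ} (hg : Continuous g) :
    Integrable fun x => g x * √(1 - x ^ 2) := by
  refine Continuous.integrable_of_hasCompactSupport (by fun_prop)
    (HasCompactSupport.intro (isCompact_Icc (a := (-1 : ℝ)) (b := 1)) fun x hx => ?_)
  rw [sqrt_one_sub_sq_eq_zero (le_of_not_ge fun h => hx (abs_le.1 h)), mul_zero]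

lemma abs_eval_U_le (n : ℕ) (x : ℝ) : |(U ℝ n).eval x| ≤ (3 * max 1 |x|) ^ n := by
  have one_le : 1 ≤ max 1 |x| := le_max_left _ _
  have abs_le : |x| ≤ max 1 |x| := le_max_right _ _
  set M := max 1 |x|
  induction n using Nat.twoStepInduction with
  | zero => simp
  | one =>
    simp only [Nat.cast_one, U_one, Polynomial.eval_mul, Polynomial.eval_ofNat, Polynomial.eval_X,
      abs_mul, abs_two, pow_one]
    linarith
  | more n ih₀ ih₁ =>
    have recurrence : (U ℝ (n + 2 : ℕ)).eval x =
        2 * x * (U ℝ (n + 1 : ℕ)).eval x - (U ℝ n).eval x := by simp [U_add_two]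
    calc |(U ℝ (n + 2 : ℕ)).eval x|
        ≤ |2 * x * (U ℝ (n + 1 : ℕ)).eval x| + |(U ℝ n).eval x| := recurrence ▸ abs_sub _ _
      _ = 2 * |x| * |(U ℝ (n + 1 : ℕ)).eval x| + |(U ℝ n).eval x| := by
          rw [abs_mul, abs_mul, abs_two]
      _ ≤ 2 * M * (3 * M) ^ (n + 1) + (3 * M) ^ n := by gcongr
      _ = (6 * M ^ 2 + 1) * (3 * M) ^ n := by ring
      _ ≤ (3 * M) ^ 2 * (3 * M) ^ n := by gcongr; nlinarith
      _ = (3 * M) ^ (n + 2) := by ring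

/-- The Chebyshev polynomials of the second kind, as a polynomial sequence; used for the fact that
the first `m + 1` of them span the polynomials of degree at most `m`. -/
noncomputable def chebyshevUSequence : Polynomial.Sequence ℝ where
  elems' n := U ℝ n
  degree_eq' n := degree_U_natCast ℝ n

/-- The polynomials `p` for which `p * h` is integrable with integral zero. The moments of `h` up to
order `m` all exist and vanish exactly when this space contains every polynomial of degree at
most `m`. -/
noncomputable def integralKernel (μ : Measure ℝ) (h : ℝ → ℝ) : Submodule ℝ (Polynomial ℝ) where
  carrier := {p | Integrable (fun x => p.eval x * h x) μ ∧ ∫ x, p.eval x * h x ∂μ = 0}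
  zero_mem' := by simp
  add_mem' := by
    rintro p q ⟨hp, hp₀⟩ ⟨hq, hq₀⟩
    simp only [Set.mem_ofPred_eq, Polynomial.eval_add, add_mul]
    exact ⟨hp.add hq, by rw [integral_add hp hq, hp₀, hq₀, add_zero]⟩
  smul_mem' := by
    rintro c p ⟨hp, hp₀⟩
    simp only [Set.mem_ofPred_eq, Polynomial.eval_smul, smul_eq_mul, mul_assoc]
    exact ⟨hp.const_mul c, by rw [integral_const_mul, hp₀, mul_zero]⟩

lemma degreeLE_le_integralKernel {μ : Measure ℝ} {h : ℝ → ℝ} {m : ℕ}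
    (hU : ∀ i : ℕ, i ≤ m → U ℝ i ∈ integralKernel μ h) :
    Polynomial.degreeLE ℝ m ≤ integralKernel μ h := by
  rw [← chebyshevUSequence.span_degreeLE fun i _ =>
    (Polynomial.leadingCoeff_ne_zero.2 (chebyshevUSequence.ne_zero i)).isUnit, Submodule.span_le]
  rintro _ ⟨i, hi, rfl⟩
  exact hU i hi

/-- The function `P(x) √(1 - x²)` with `deg P ≤ m` that has the same moments as `D` up to order `m`,
given by its expansion in Chebyshev polynomials of the second kind. It transports these moments to
the interval `[-1, 1]`, outside of which it vanishes because `√` is zero on negative numbers. -/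
noncomputable def chebyshevProjection (m : ℕ) (D : ℝ → ℝ) (x : ℝ) : ℝ :=
  (∑ i ∈ Finset.range (m + 1), 2 / π * (∫ y, (U ℝ i).eval y * D y) * (U ℝ i).eval x) * √(1 - x ^ 2)

section Projection

variable {m : ℕ} {D G : ℝ → ℝ}

@[fun_prop]
lemma continuous_chebyshevProjection : Continuous (chebyshevProjection m D) := by
  unfold chebyshevProjection; fun_prop

lemma chebyshevProjection_eq_zero {x : ℝ} (hx : 1 ≤ |x|) : chebyshevProjection m D x = 0 := by
  rw [chebyshevProjection, sqrt_one_sub_sq_eq_zero hx, mul_zero]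

lemma integrable_mul_chebyshevProjection {g : ℝ → ℝ} (hg : Continuous g) :
    Integrable fun x => g x * chebyshevProjection m D x := by
  simp only [chebyshevProjection, ← mul_assoc]
  exact integrable_mul_sqrt_one_sub_sq (by fun_prop)

lemma integral_eval_U_mul_chebyshevProjection {j : ℕ} (hj : j ≤ m) :
    ∫ x, (U ℝ j).eval x * chebyshevProjection m D x = ∫ x, (U ℝ j).eval x * D x := by
  have expand : ∀ x, (U ℝ j).eval x * chebyshevProjection m D x =
      ∑ i ∈ Finset.range (m + 1), 2 / π * (∫ y, (U ℝ i).eval y * D y) *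
        ((U ℝ i).eval x * (U ℝ j).eval x * √(1 - x ^ 2)) := fun x => by
    simp only [chebyshevProjection, Finset.sum_mul, Finset.mul_sum]
    exact Finset.sum_congr rfl fun i _ => by ring
  simp_rw [expand]
  rw [integral_finsetSum _ fun i _ =>
    (integrable_mul_sqrt_one_sub_sq (by fun_prop)).const_mul _]
  simp_rw [integral_const_mul, integral_eval_U_mul_eval_U_mul_sqrt]
  rw [Finset.sum_eq_single_of_mem j (Finset.mem_range_succ_iff.2 hj) fun i _ hij => by simp [hij],
    if_pos rfl]
  field_simp

lemma abs_eval_U_mul_le (hDG : ∀ x, (18 * max 1 |x|) ^ m * |D x| ≤ G x) {i : ℕ} (hi : i ≤ m)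
    (x : ℝ) : |(U ℝ i).eval x * D x| ≤ G x / 6 ^ m := by
  have one_le : 1 ≤ 3 * max 1 |x| := by linarith [le_max_left 1 |x|]
  rw [le_div_iff₀ (by positivity), abs_mul]
  calc |(U ℝ i).eval x| * |D x| * 6 ^ m
      ≤ (3 * max 1 |x|) ^ m * |D x| * 6 ^ m := by
        gcongr
        exact (abs_eval_U_le i x).trans (pow_le_pow_right₀ one_le hi)
    _ = (18 * max 1 |x|) ^ m * |D x| := by rw [mul_right_comm, ← mul_pow]; ring_nf
    _ ≤ G x := hDG x

lemma integrable_eval_U_mul (hD : AEStronglyMeasurable D) (hG : Integrable G)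
    (hDG : ∀ x, (18 * max 1 |x|) ^ m * |D x| ≤ G x) {i : ℕ} (hi : i ≤ m) :
    Integrable fun x => (U ℝ i).eval x * D x := by
  refine (hG.div_const (6 ^ m)).mono' ?_ ?_
  · exact (U ℝ i).continuous.aestronglyMeasurable.mul hD
  · exact ae_of_all _ (abs_eval_U_mul_le hDG hi)

lemma abs_integral_eval_U_mul_le (hG : Integrable G)
    (hDG : ∀ x, (18 * max 1 |x|) ^ m * |D x| ≤ G x) {i : ℕ} (hi : i ≤ m) :
    |∫ x, (U ℝ i).eval x * D x| ≤ (∫ x, G x) / 6 ^ m := by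
  rw [← integral_div, ← Real.norm_eq_abs]
  exact norm_integral_le_of_norm_le (hG.div_const _) (ae_of_all _ (abs_eval_U_mul_le hDG hi))

theorem abs_chebyshevProjection_le (hG : Integrable G)
    (hDG : ∀ x, (18 * max 1 |x|) ^ m * |D x| ≤ G x) (x : ℝ) :
    |chebyshevProjection m D x| ≤ ∫ y, G y := by
  have hG₀ : 0 ≤ ∫ y, G y := integral_nonneg fun y => le_trans (by positivity) (hDG y)
  rcases le_total 1 |x| with hx | hx
  · rwa [chebyshevProjection_eq_zero hx, abs_zero]
  have two_div_pi : 2 / π ≤ 1 := (div_le_one Real.pi_pos).2 Real.two_le_pi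
  have term_le : ∀ i ∈ Finset.range (m + 1),
      |2 / π * (∫ y, (U ℝ i).eval y * D y) * (U ℝ i).eval x| ≤ (∫ y, G y) / 2 ^ m := by
    intro i hi
    rw [Finset.mem_range_succ_iff] at hi
    have hU : |(U ℝ i).eval x| ≤ 3 ^ m := by
      have h := abs_eval_U_le i x
      rw [max_eq_left hx, mul_one] at h
      exact h.trans (pow_le_pow_right₀ (by norm_num) hi)
    rw [abs_mul, abs_mul, abs_of_nonneg (by positivity : 0 ≤ 2 / π)]
    calc 2 / π * |∫ y, (U ℝ i).eval y * D y| * |(U ℝ i).eval x|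
        ≤ 1 * ((∫ y, G y) / 6 ^ m) * 3 ^ m := by
          gcongr
          exact abs_integral_eval_U_mul_le hG hDG hi
      _ = (∫ y, G y) / 2 ^ m := by
          rw [show (6 : ℝ) = 2 * 3 by norm_num, mul_pow]; field_simp
  have succ_le : ((m + 1 : ℕ) : ℝ) ≤ 2 ^ m := by exact_mod_cast Nat.lt_two_pow_self (n := m)
  rw [chebyshevProjection, abs_mul, abs_of_nonneg (Real.sqrt_nonneg _)]
  calc _ ≤ (∑ i ∈ Finset.range (m + 1), (∫ y, G y) / 2 ^ m) * 1 := by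
        gcongr
        · exact (Finset.abs_sum_le_sum_abs _ _).trans (Finset.sum_le_sum term_le)
        · exact Real.sqrt_le_one.2 (sub_le_self _ (sq_nonneg x))
    _ = (m + 1 : ℕ) * ((∫ y, G y) / 2 ^ m) := by simp
    _ ≤ 2 ^ m * ((∫ y, G y) / 2 ^ m) := by gcongr
    _ = ∫ y, G y := by field_simp

theorem degreeLE_le_integralKernel_sub_chebyshevProjection (hD : AEStronglyMeasurable D)
    (hG : Integrable G) (hDG : ∀ x, (18 * max 1 |x|) ^ m * |D x| ≤ G x) :
    Polynomial.degreeLE ℝ m ≤ integralKernel volume fun x => D x - chebyshevProjection m D x := by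
  refine degreeLE_le_integralKernel fun i hi => ?_
  have hDi := integrable_eval_U_mul hD hG hDG hi
  have hPi : Integrable fun x => (U ℝ i).eval x * chebyshevProjection m D x :=
    integrable_mul_chebyshevProjection (by fun_prop)
  constructor <;> simp only [mul_sub]
  · exact hDi.sub hPi
  · rw [integral_sub hDi hPi, integral_eval_U_mul_chebyshevProjection hi, sub_self]

end Projection

end Chebyshev

section Gaussian

lemma gaussPDF_eq_gaussianPDFReal : gaussPDF = ProbabilityTheory.gaussianPDFReal 0 1 := by
  ext x
  simp [gaussPDF, ProbabilityTheory.gaussianPDFReal, div_eq_inv_mul]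

lemma gaussPDF_pos (x : ℝ) : 0 < gaussPDF x :=
  gaussPDF_eq_gaussianPDFReal ▸ ProbabilityTheory.gaussianPDFReal_pos 0 1 x one_ne_zero

lemma integral_gaussPDF : ∫ x, gaussPDF x = 1 :=
  gaussPDF_eq_gaussianPDFReal ▸ ProbabilityTheory.integral_gaussianPDFReal_eq_one 0 one_ne_zero

@[fun_prop]
lemma measurable_gaussPDF : Measurable gaussPDF :=
  gaussPDF_eq_gaussianPDFReal ▸ ProbabilityTheory.measurable_gaussianPDFReal 0 1

lemma integrable_pow_mul_gaussPDF (k : ℕ) : Integrable fun x => x ^ k * gaussPDF x := by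
  have h := (integrable_rpow_mul_exp_neg_mul_sq (b := 1 / 2) (by norm_num)
    (s := k) (by linarith [k.cast_nonneg (α := ℝ)])).div_const √(2 * Real.pi)
  refine h.congr (ae_of_all _ fun x => ?_)
  simp only [gaussPDF, Real.rpow_natCast, mul_div_assoc]
  ring_nf

lemma gaussPDF_sub (x δ : ℝ) : gaussPDF (x - δ) = gaussPDF x * Real.exp (δ * x - δ ^ 2 / 2) := by
  unfold gaussPDF
  rw [div_mul_eq_mul_div, ← Real.exp_add]
  ring_nf

lemma gaussPDF_le_exp (x : ℝ) : gaussPDF x ≤ Real.exp (-(1 / 2) * x ^ 2) := by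
  have one_le : 1 ≤ √(2 * Real.pi) := Real.one_le_sqrt.2 (by linarith [Real.pi_gt_three])
  rw [gaussPDF, show -x ^ 2 / 2 = -(1 / 2) * x ^ 2 by ring]
  exact div_le_self (Real.exp_pos _).le one_le

lemma one_sixth_le_gaussPDF {x : ℝ} (hx : |x| ≤ 1) : 1 / 6 ≤ gaussPDF x := by
  have sqrt_le : √(2 * Real.pi) ≤ 3 :=
    Real.sqrt_le_iff.2 ⟨by norm_num, by linarith [Real.pi_lt_four]⟩
  have half_le : 1 / 2 ≤ Real.exp (-x ^ 2 / 2) := by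
    linarith [Real.add_one_le_exp (-x ^ 2 / 2), (sq_le_one_iff_abs_le_one x).2 hx]
  calc (1 / 6 : ℝ) = 1 / 2 / 3 := by norm_num
    _ ≤ gaussPDF x := by unfold gaussPDF; gcongr

lemma abs_mul_sub_sq_div_two_le {δ x r : ℝ} (hδ : |δ| ≤ r) (hx : |x| ≤ r) :
    |δ * x - δ ^ 2 / 2| ≤ 2 * |δ| * r := by
  calc |δ * x - δ ^ 2 / 2| ≤ |δ * x| + |δ ^ 2 / 2| := abs_sub _ _
    _ = |δ| * |x| + |δ| * |δ| / 2 := by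
        rw [abs_mul, abs_of_nonneg (by positivity : 0 ≤ δ ^ 2 / 2), abs_mul_abs_self, sq]
    _ ≤ |δ| * r + |δ| * r := by
        gcongr
        nlinarith [abs_nonneg δ]
    _ = 2 * |δ| * r := by ring

lemma abs_exp_sub_one_le_mul_exp (t : ℝ) : |Real.exp t - 1| ≤ |t| * Real.exp |t| := by
  have h := Complex.norm_exp_sub_sum_le_norm_mul_exp t 1
  rw [Finset.sum_range_one, pow_zero, Nat.factorial_zero, Nat.cast_one, div_one, pow_one,
    Complex.norm_real, Real.norm_eq_abs] at h
  exact_mod_cast h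

lemma abs_gaussPDF_sub_gaussPDF_sub_le {δ x R : ℝ} (hδ : |δ| ≤ R) (hδR : 2 * |δ| * R ≤ 1)
    (hx : |x| ≤ R) : |gaussPDF x - gaussPDF (x - δ)| ≤ 4 * |δ| * R * gaussPDF (x - δ) := by
  set t := δ * x - δ ^ 2 / 2
  have ht : |t| ≤ 2 * |δ| * R := abs_mul_sub_sq_div_two_le hδ hx
  have factor : gaussPDF x - gaussPDF (x - δ) = (Real.exp (-t) - 1) * gaussPDF (x - δ) := by
    rw [gaussPDF_sub x δ, sub_one_mul, mul_left_comm, ← Real.exp_add, neg_add_cancel,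
      Real.exp_zero, mul_one]
  have exp_le : |Real.exp (-t) - 1| ≤ 2 * |t| :=
    abs_neg t ▸ Real.abs_exp_sub_one_le (by rw [abs_neg]; exact ht.trans hδR)
  rw [factor, abs_mul, abs_of_pos (gaussPDF_pos _)]
  gcongr
  · exact (gaussPDF_pos _).le
  · linarith

lemma abs_gaussPDF_sub_sub_gaussPDF_le_exp {δ x : ℝ} (hδ : |δ| ≤ 1) (hx : 16 ≤ |x|) :
    |gaussPDF (x - δ) - gaussPDF x| ≤ 4 * |δ| * Real.exp (-(5 / 16) * x ^ 2) := by
  set t := δ * x - δ ^ 2 / 2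
  have ht : |t| ≤ 2 * |δ| * |x| := abs_mul_sub_sq_div_two_le (by linarith) le_rfl
  have t_le : |t| ≤ x ^ 2 / 8 := by rw [← sq_abs x]; nlinarith
  have x_le : |x| ≤ 2 * Real.exp (x ^ 2 / 16) := by
    rw [← sq_abs x]
    linarith [Real.add_one_le_exp (|x| ^ 2 / 16), sq_nonneg (|x| - 4)]
  have exp_le : |Real.exp t - 1| ≤ 4 * |δ| * Real.exp (x ^ 2 / 16) * Real.exp (x ^ 2 / 8) :=
    calc |Real.exp t - 1| ≤ |t| * Real.exp |t| := abs_exp_sub_one_le_mul_exp t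
      _ ≤ (2 * |δ| * (2 * Real.exp (x ^ 2 / 16))) * Real.exp (x ^ 2 / 8) := by
          gcongr
          exact ht.trans (by gcongr)
      _ = _ := by ring
  calc |gaussPDF (x - δ) - gaussPDF x| = gaussPDF x * |Real.exp t - 1| := by
        rw [gaussPDF_sub, ← mul_sub_one, abs_mul, abs_of_pos (gaussPDF_pos x)]
    _ ≤ Real.exp (-(1 / 2) * x ^ 2) *
          (4 * |δ| * Real.exp (x ^ 2 / 16) * Real.exp (x ^ 2 / 8)) := by
        gcongr
        exact gaussPDF_le_exp x
    _ = 4 * |δ| * (Real.exp (-(1 / 2) * x ^ 2) * Real.exp (x ^ 2 / 16) * Real.exp (x ^ 2 / 8)) := by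
        ring
    _ = 4 * |δ| * Real.exp (-(5 / 16) * x ^ 2) := by
        rw [← Real.exp_add, ← Real.exp_add]
        ring_nf

end Gaussian

section MomentMatching

lemma pow_le_exp_of_mul_log_le {m : ℕ} {a b R x : ℝ} (ha : 0 < a) (haR : Real.exp 2⁻¹ ≤ a * R)
    (hm : m * Real.log (a * R) ≤ b * R ^ 2) (hx : R ≤ x) :
    (a * x) ^ m ≤ Real.exp (b * x ^ 2) := by
  have hR : 0 < R := (mul_pos_iff_of_pos_left ha).1 ((Real.exp_pos _).trans_le haR)
  have hx₀ : 0 < x := hR.trans_le hx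
  have hax : a * R ≤ a * x := by gcongr
  have log_le : Real.log (a * x) ≤ Real.log (a * R) * (x / R) ^ 2 := by
    have h := Real.log_div_self_rpow_antitoneOn two_pos haR (haR.trans hax) hax
    simp only [Real.rpow_two] at h
    rw [div_le_iff₀ (by positivity)] at h
    refine h.trans_eq ?_
    field_simp
  rw [← Real.exp_log (by positivity : 0 < a * x), ← Real.exp_nat_mul, Real.exp_le_exp]
  calc m * Real.log (a * x) ≤ m * (Real.log (a * R) * (x / R) ^ 2) := by gcongr
    _ = m * Real.log (a * R) * (x / R) ^ 2 := by ring
    _ ≤ b * R ^ 2 * (x / R) ^ 2 := by gcongr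
    _ = b * x ^ 2 := by field_simp

/-- The part of `φ(x - δ) - φ(x)` outside `[-R, R]`. Adding it to `φ` produces `φ(x - δ)` on the
tails, where the two densities are not comparable. -/
noncomputable def tailShift (δ R : ℝ) : ℝ → ℝ :=
  {x | R < |x|}.indicator fun x => gaussPDF (x - δ) - gaussPDF x

/-- The function `φ + D - P √(1 - x²)` close to the density of `N(δ, 1)` that shares the first `m`
moments of `N(0, 1)`, where `D` is the tail shift and the last term its moment correction. -/
noncomputable def momentMatchedPDF (m : ℕ) (δ R x : ℝ) : ℝ :=
  gaussPDF x + (tailShift δ R x - chebyshevProjection m (tailShift δ R) x)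

variable {m : ℕ} {δ R : ℝ}

lemma tailShift_of_lt {x : ℝ} (hx : R < |x|) : tailShift δ R x = gaussPDF (x - δ) - gaussPDF x :=
  Set.indicator_of_mem (s := {x | R < |x|}) hx _

lemma tailShift_of_le {x : ℝ} (hx : |x| ≤ R) : tailShift δ R x = 0 :=
  Set.indicator_of_notMem (s := {x | R < |x|}) hx.not_gt _

@[fun_prop]
lemma measurable_tailShift : Measurable (tailShift δ R) :=
  Measurable.indicator (by fun_prop) (measurableSet_lt (by fun_prop) (by fun_prop))

lemma measurable_momentMatchedPDF : Measurable (momentMatchedPDF m δ R) := by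
  unfold momentMatchedPDF
  fun_prop

lemma pow_mul_abs_tailShift_le (hδ : |δ| ≤ 1) (hR : 16 ≤ R)
    (hm : m * Real.log (18 * R) ≤ R ^ 2 / 8) (x : ℝ) :
    (18 * max 1 |x|) ^ m * |tailShift δ R x| ≤ 4 * |δ| * Real.exp (-(3 / 16) * x ^ 2) := by
  by_cases hx : R < |x|
  · have exp_le : Real.exp 2⁻¹ ≤ 18 * R := by
      linarith [Real.exp_one_lt_d9, Real.exp_le_exp.2 (by norm_num : (2⁻¹ : ℝ) ≤ 1)]
    have pow_le : (18 * |x|) ^ m ≤ Real.exp (1 / 8 * |x| ^ 2) :=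
      pow_le_exp_of_mul_log_le (by norm_num) exp_le (by linarith) hx.le
    rw [tailShift_of_lt hx, max_eq_right (by linarith)]
    calc (18 * |x|) ^ m * |gaussPDF (x - δ) - gaussPDF x|
        ≤ Real.exp (1 / 8 * |x| ^ 2) * (4 * |δ| * Real.exp (-(5 / 16) * x ^ 2)) := by
          gcongr
          exact abs_gaussPDF_sub_sub_gaussPDF_le_exp hδ (by linarith)
      _ = 4 * |δ| * (Real.exp (1 / 8 * x ^ 2) * Real.exp (-(5 / 16) * x ^ 2)) := by
          rw [sq_abs]; ring
      _ = 4 * |δ| * Real.exp (-(3 / 16) * x ^ 2) := by rw [← Real.exp_add]; ring_nf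
  · rw [tailShift_of_le (not_lt.1 hx), abs_zero, mul_zero]
    positivity

lemma integrable_mul_exp_neg_three_sixteenths (c : ℝ) :
    Integrable fun x : ℝ => c * Real.exp (-(3 / 16) * x ^ 2) :=
  (integrable_exp_neg_mul_sq (by norm_num)).const_mul c

lemma abs_chebyshevProjection_tailShift_le (hδ : |δ| ≤ 1) (hR : 16 ≤ R)
    (hm : m * Real.log (18 * R) ≤ R ^ 2 / 8) (x : ℝ) :
    |chebyshevProjection m (tailShift δ R) x| ≤ 20 * |δ| := by
  have sqrt_le : √(Real.pi / (3 / 16)) ≤ 5 :=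
    Real.sqrt_le_iff.2 ⟨by norm_num, by linarith [Real.pi_lt_four]⟩
  calc |chebyshevProjection m (tailShift δ R) x|
      ≤ ∫ y, 4 * |δ| * Real.exp (-(3 / 16) * y ^ 2) :=
        abs_chebyshevProjection_le (integrable_mul_exp_neg_three_sixteenths _)
          (pow_mul_abs_tailShift_le hδ hR hm) x
    _ = 4 * |δ| * √(Real.pi / (3 / 16)) := by rw [integral_const_mul, integral_gaussian]
    _ ≤ 4 * |δ| * 5 := by gcongr
    _ = 20 * |δ| := by ring

theorem integral_pow_mul_momentMatchedPDF (hδ : |δ| ≤ 1) (hR : 16 ≤ R)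
    (hm : m * Real.log (18 * R) ≤ R ^ 2 / 8) {k : ℕ} (hk : k ≤ m) :
    ∫ x, x ^ k * momentMatchedPDF m δ R x = ∫ x, x ^ k * gaussPDF x := by
  have hX : (Polynomial.X ^ k : Polynomial ℝ) ∈ Polynomial.degreeLE ℝ m :=
    Polynomial.mem_degreeLE.2 ((Polynomial.degree_X_pow_le k).trans (by exact_mod_cast hk))
  obtain ⟨h_int, h_zero⟩ := degreeLE_le_integralKernel_sub_chebyshevProjection
    measurable_tailShift.aestronglyMeasurable (integrable_mul_exp_neg_three_sixteenths _)
    (pow_mul_abs_tailShift_le hδ hR hm) hX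
  simp only [Polynomial.eval_pow, Polynomial.eval_X] at h_int h_zero
  simp only [momentMatchedPDF, mul_add]
  rw [integral_add (integrable_pow_mul_gaussPDF k) h_int, h_zero, add_zero]

theorem abs_momentMatchedPDF_sub_le (hR : 90 ≤ R) (hδR : 2 * |δ| * R ≤ 1)
    (hm : m * Real.log (18 * R) ≤ R ^ 2 / 8) (x : ℝ) :
    |momentMatchedPDF m δ R x - gaussPDF (x - δ)| ≤ 8 * |δ| * R * gaussPDF (x - δ) := by
  have hδ : |δ| ≤ 1 := by nlinarith [abs_nonneg δ]
  have hφ := gaussPDF_pos (x - δ)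
  unfold momentMatchedPDF
  by_cases hxR : R < |x|
  · rw [tailShift_of_lt hxR, chebyshevProjection_eq_zero (by linarith), sub_zero,
      add_sub_cancel, sub_self, abs_zero]
    positivity
  have shift_le : |gaussPDF x - gaussPDF (x - δ)| ≤ 4 * |δ| * R * gaussPDF (x - δ) :=
    abs_gaussPDF_sub_gaussPDF_sub_le (by linarith) hδR (not_lt.1 hxR)
  have correction_le :
      |chebyshevProjection m (tailShift δ R) x| ≤ 4 * |δ| * R * gaussPDF (x - δ) := by
    rcases le_total 1 |x| with hx | hx
    · rw [chebyshevProjection_eq_zero hx, abs_zero]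
      positivity
    have le_shifted : 1 / 18 ≤ gaussPDF (x - δ) := by
      have : gaussPDF x ≤ 3 * gaussPDF (x - δ) := by nlinarith [le_of_abs_le shift_le]
      linarith [one_sixth_le_gaussPDF hx]
    calc |chebyshevProjection m (tailShift δ R) x| ≤ 20 * |δ| :=
          abs_chebyshevProjection_tailShift_le hδ (by linarith) hm x
      _ = 4 * |δ| * 90 * (1 / 18) := by ring
      _ ≤ 4 * |δ| * R * gaussPDF (x - δ) := by gcongr
  rw [tailShift_of_le (not_lt.1 hxR), zero_sub, ← sub_eq_add_neg, sub_right_comm]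
  linarith [abs_sub (gaussPDF x - gaussPDF (x - δ)) (chebyshevProjection m (tailShift δ R) x)]

end MomentMatching

section Parameters

lemma corruption_bounds_of_abs_sub_le {ε p q : ℝ} (hε : ε ≤ 2) (hp : 0 ≤ p)
    (h : |q - p| ≤ ε / 2 * p) : (1 - ε) * p ≤ (1 - ε / 2) * q ∧ (1 - ε / 2) * q ≤ p := by
  obtain ⟨h_lower, h_upper⟩ := abs_le.1 h
  have hC : 0 ≤ 1 - ε / 2 := by linarith
  constructor
  · calc (1 - ε) * p ≤ (1 - ε / 2) * ((1 - ε / 2) * p) := by nlinarith [mul_nonneg (sq_nonneg ε) hp]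
      _ ≤ (1 - ε / 2) * q := by gcongr; linarith
  · calc (1 - ε / 2) * q ≤ (1 - ε / 2) * ((1 + ε / 2) * p) := by gcongr; linarith
      _ ≤ p := by nlinarith [mul_nonneg (sq_nonneg ε) hp]

lemma half_le_log_one_add_half_div {ε : ℝ} (hε : ε < 2) :
    ε / 2 ≤ Real.log (1 + (ε / 2) / (1 - ε / 2)) := by
  have hC : 0 < 1 - ε / 2 := by linarith
  have eq_inv : 1 + (ε / 2) / (1 - ε / 2) = (1 - ε / 2)⁻¹ :=
    eq_inv_of_mul_eq_one_left (by rw [add_mul, div_mul_cancel₀ _ hC.ne']; ring)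
  rw [eq_inv, Real.log_inv]
  linarith [Real.log_le_sub_one_of_pos hC]

lemma log_one_add_half_div_le {ε : ℝ} (hε₀ : 0 ≤ ε) (hε₁ : ε ≤ 1) :
    Real.log (1 + (ε / 2) / (1 - ε / 2)) ≤ ε := by
  have hC : 0 < 1 - ε / 2 := by linarith
  calc Real.log (1 + (ε / 2) / (1 - ε / 2)) ≤ (ε / 2) / (1 - ε / 2) := by
        linarith [Real.log_le_sub_one_of_pos (show 0 < 1 + (ε / 2) / (1 - ε / 2) by positivity)]
    _ ≤ ε := by
        rw [div_le_iff₀ hC]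
        nlinarith

lemma natFloor_mul_log_le {γ : ℝ} (hγ : 2 ≤ γ) :
    ⌊1 / 4096 * γ ^ 2 / Real.log γ⌋₊ * Real.log (18 * (γ / 16)) ≤ (γ / 16) ^ 2 / 8 := by
  have log_pos : 0 < Real.log γ := Real.log_pos (by linarith)
  have log_le : Real.log (18 * (γ / 16)) ≤ 2 * Real.log γ := by
    rw [← Nat.cast_two, ← Real.log_pow]
    exact Real.log_le_log (by positivity) (by nlinarith)
  calc ⌊1 / 4096 * γ ^ 2 / Real.log γ⌋₊ * Real.log (18 * (γ / 16))
      ≤ 1 / 4096 * γ ^ 2 / Real.log γ * (2 * Real.log γ) := by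
        gcongr
        · exact Real.log_nonneg (by linarith)
        · exact Nat.floor_le (by positivity)
    _ = (γ / 16) ^ 2 / 8 := by field_simp; norm_num

end Parameters

/-- There is an absolute constant `c > 0` such that for all `ε ∈ (0,1)` and `δ ∈ (0, cε)`,
setting `γ = (1/δ)·log(1 + (ε/2)/(1−ε/2))` and `m = ⌊c·γ²/log γ⌋`, there exists an
`ε`-corruption `f` of the density of `N(δ,1)` whose visible-sample distribution matches
the first `m` moments of `N(0,1)`. -/
theorem stmt0 :
    ∃ c : ℝ, 0 < c ∧
      ∀ ε δ : ℝ, ε ∈ Set.Ioo (0 : ℝ) 1 → δ ∈ Set.Ioo 0 (c * ε) →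
        ∃ f : ℝ → ℝ, Measurable f ∧
          (∀ x : ℝ, (1 - ε) * gaussPDF (x - δ) ≤ f x ∧ f x ≤ gaussPDF (x - δ)) ∧
          ∀ i : ℕ, 1 ≤ i →
            i ≤ ⌊c * ((1 / δ) * Real.log (1 + (ε / 2) / (1 - ε / 2))) ^ 2 /
                  Real.log ((1 / δ) * Real.log (1 + (ε / 2) / (1 - ε / 2)))⌋₊ →
            (∫ x : ℝ, x ^ i * f x) / (∫ x : ℝ, f x) = ∫ z : ℝ, z ^ i * gaussPDF z := by
  refine ⟨1 / 4096, by norm_num, ?_⟩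
  rintro ε δ ⟨hε₀, hε₁⟩ ⟨hδ₀, hδ⟩
  have log_ge := half_le_log_one_add_half_div (by linarith : ε < 2)
  have log_le := log_one_add_half_div_le hε₀.le hε₁.le
  set γ := (1 / δ) * Real.log (1 + (ε / 2) / (1 - ε / 2)) with γ_def
  have hδγ : δ * γ = Real.log (1 + (ε / 2) / (1 - ε / 2)) := by rw [γ_def]; field_simp
  have hγ : 2048 ≤ γ := by nlinarith
  have hm := natFloor_mul_log_le (by linarith : 2 ≤ γ)
  set m := ⌊1 / 4096 * γ ^ 2 / Real.log γ⌋₊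
  have hδ_abs : |δ| = δ := abs_of_pos hδ₀
  have moments {k : ℕ} (hk : k ≤ m) :=
    integral_pow_mul_momentMatchedPDF (δ := δ) (by linarith) (by linarith) hm hk
  have mass : ∫ x, momentMatchedPDF m δ (γ / 16) x = 1 := by
    simpa [integral_gaussPDF] using moments m.zero_le
  refine ⟨fun x => (1 - ε / 2) * momentMatchedPDF m δ (γ / 16) x,
    measurable_momentMatchedPDF.const_mul _, fun x => ?_, fun i _ hi => ?_⟩
  · refine corruption_bounds_of_abs_sub_le (by linarith) (gaussPDF_pos _).le
      ((abs_momentMatchedPDF_sub_le (by linarith) (by rw [hδ_abs]; linarith) hm x).trans ?_)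
    exact mul_le_mul_of_nonneg_right (by rw [hδ_abs]; linarith) (gaussPDF_pos _).le
  · have hC : 1 - ε / 2 ≠ 0 := by linarith
    simp only [mul_left_comm _ (1 - ε / 2), integral_const_mul, moments hi, mass, mul_one]
    exact mul_div_cancel_left₀ _ hC
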